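/- Let (T,f) be a Hubbard tree and let z₁ be the characteristic point of a periodic orbit of branch points, of exact period n. Then the first return map f^n either permutes all the local arms at z₁ transitively in a single cycle, or it fixes the local arm at z₁ pointing toward c₀ and permutes all the other local arms at z₁ transitively in a single cycle. -/

import Mathlib

/- Common definitions for formalizing "Admissibility of kneading sequences and
structure of Hubbard trees for quadratic polynomials" by Bruin–Schleicher. -/

namespace HubbardTrees

/-- The symbols `0`, `1`, `*` used for itineraries and kneading sequences. -/
inductive Sym : Type
  | zero : Sym
  | one : Sym
  | star : Sym
deriving DecidableEq

/-- `A` is an arc in `X` joining `x` and `y` (a point if `x = y`, otherwise a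
homeomorphic image of `[0,1]` with endpoints `x` and `y`). -/
def IsArcBetween {X : Type*} [TopologicalSpace X] (A : Set X) (x y : X) : Prop :=
  (x = y ∧ A = {x}) ∨
  (x ≠ y ∧ ∃ γ : Path x y, Topology.IsEmbedding ⇑γ ∧ Set.range ⇑γ = A)

/-- The global arms at `x`: the connected components of `X \ {x}`. -/
def arms {X : Type*} [TopologicalSpace X] (x : X) : Set (Set X) :=
  {C | ∃ y, y ≠ x ∧ C = connectedComponentIn {x}ᶜ y}

/-- The global arm at `x` containing `y` (for `y ≠ x`): the component of `X \ {x}`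
containing `y`.  Local arms at `x` being germs of global arms, we represent the local
arm at `x` pointing towards `y` by this set. -/
def armTo {X : Type*} [TopologicalSpace X] (x y : X) : Set X :=
  connectedComponentIn {x}ᶜ y

/-- `x` is an endpoint: it has exactly one arm. -/
def IsEndpoint {X : Type*} [TopologicalSpace X] (x : X) : Prop :=
  (arms x).ncard = 1

/-- `x` is a branch point: it has at least three arms. -/
def IsBranchPt {X : Type*} [TopologicalSpace X] (x : X) : Prop :=
  3 ≤ (arms x).ncard

/-- `f` maps the set `A` homeomorphically onto its image. -/
def MapsHomeoOn {X : Type*} [TopologicalSpace X] (f : X → X) (A : Set X) : Prop :=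
  Topology.IsEmbedding (A.restrict f)

/-- `f` is a local homeomorphism onto its image at `x`. -/
def IsLocalHomeoAt {X : Type*} [TopologicalSpace X] (f : X → X) (x : X) : Prop :=
  ∃ U : Set X, IsOpen U ∧ x ∈ U ∧ Topology.IsEmbedding (U.restrict f)

/-- `g` sends the local arm at `x` represented by the global arm `C` to the local
arm at `g x` represented by `C'` (germ condition: some initial piece of `C` at `x`
is mapped into `C'`). -/
def MapsLocalArm {X : Type*} [TopologicalSpace X] (g : X → X) (x : X) (C C' : Set X) : Prop :=
  C ∈ arms x ∧ C' ∈ arms (g x) ∧ ∃ U ∈ nhds x, g '' (C ∩ U) ⊆ C'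

/-- `z` is periodic under `f` with exact period `n`. -/
def ExactPeriod {Y : Type*} (f : Y → Y) (z : Y) (n : ℕ) : Prop :=
  1 ≤ n ∧ f^[n] z = z ∧ ∀ k, 1 ≤ k → k < n → f^[k] z ≠ z

/-- The first return map `f^[n]` of the fixed point `z` of `f^[n]` permutes all the
local arms at `z` transitively in a single cycle. -/
def ArmsTransitive {X : Type*} [TopologicalSpace X] (f : X → X) (n : ℕ) (z : X) : Prop :=
  ∀ C ∈ arms z, ∀ C' ∈ arms z, ∃ j : ℕ, MapsLocalArm (f^[n * j]) z C C'

/-- An (abstract) Hubbard tree: a finite topological tree `X` together with a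
continuous surjection `f` and a critical point `c0`, subject to the axioms of
Bruin–Schleicher. -/
structure HubbardTree (X : Type*) [TopologicalSpace X] : Type _ where
  /-- the dynamics -/
  f : X → X
  /-- the critical point -/
  c0 : X
  compact : CompactSpace X
  t2 : T2Space X
  conn : ConnectedSpace X
  /-- the unique arc `[x,y]` joining two points -/
  arc : X → X → Set X
  arc_isArc : ∀ x y : X, IsArcBetween (arc x y) x y
  arc_unique : ∀ (x y : X) (A : Set X), IsArcBetween A x y → A = arc x y
  -- finiteness of the tree
  arms_finite : ∀ x : X, (arms x).Finite
  branch_finite : Set.Finite {x : X | IsBranchPt x}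
  endpoint_finite : Set.Finite {x : X | IsEndpoint x}
  cont : Continuous f
  surj : Function.Surjective f
  /-- every point has at most two inverse images -/
  two_preimages : ∀ y : X, ∃ a b : X, f ⁻¹' {y} ⊆ {a, b}
  /-- local homeomorphism onto its image away from the critical point -/
  local_homeo : ∀ x : X, x ≠ c0 → IsLocalHomeoAt f x
  /-- all endpoints lie on the critical orbit -/
  endpoints_on_orbit : ∀ x : X, IsEndpoint x → ∃ k : ℕ, f^[k] c0 = x
  /-- the critical point is periodic or preperiodic -/
  crit_preperiodic : ∃ k n : ℕ, 1 ≤ n ∧ f^[k + n] c0 = f^[k] c0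
  /-- the critical point is not fixed -/
  crit_not_fixed : f c0 ≠ c0
  /-- expansivity -/
  expansive : ∀ x y : X, x ≠ y →
    (IsBranchPt x ∨ ∃ k : ℕ, f^[k] c0 = x) →
    (IsBranchPt y ∨ ∃ k : ℕ, f^[k] c0 = y) →
    ∃ n : ℕ, c0 ∈ f^[n] '' (arc x y)

namespace HubbardTree

variable {X : Type*} [TopologicalSpace X] (H : HubbardTree X)

/-- The critical value `c₁ = f(c₀)`. -/
def c1 : X := H.f H.c0

/-- The component `T₁` of `T \ {c₀}` containing the critical value. -/
def T1 : Set X := connectedComponentIn {H.c0}ᶜ H.c1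

open Classical in
/-- The symbol (`0`, `1` or `*`) attached to a point of the tree. -/
noncomputable def symOf (x : X) : Sym :=
  if x = H.c0 then Sym.star else if x ∈ H.T1 then Sym.one else Sym.zero

/-- The itinerary of `x`: a sequence of symbols, 1-indexed (the value at index `0`
is irrelevant); entry `k ≥ 1` is the symbol of `f^[k-1] x`. -/
noncomputable def itin (x : X) : ℕ → Sym :=
  fun k => H.symOf (H.f^[k - 1] x)

/-- The kneading sequence: the itinerary of the critical value (1-indexed). -/
noncomputable def kneading : ℕ → Sym := H.itin H.c1

/-- `z` is the characteristic point of its periodic orbit: `c₁` lies in one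
component of `X \ {z}` while `c₀` and all other points of the orbit lie in a
different component. -/
def IsCharacteristic (z : X) : Prop :=
  ∃ Cv Cz : Set X, Cv ∈ arms z ∧ Cz ∈ arms z ∧ Cv ≠ Cz ∧
    H.c1 ∈ Cv ∧ H.c0 ∈ Cz ∧ ∀ k : ℕ, H.f^[k] z ≠ z → H.f^[k] z ∈ Cz

/-- The first return map fixes the local arm at `z` pointing to the critical point
and permutes all other local arms transitively in a single cycle. -/
def OtherArmsTransitive (n : ℕ) (z : X) : Prop :=
  ∀ C ∈ arms z, C ≠ armTo z H.c0 → ∀ C' ∈ arms z, C' ≠ armTo z H.c0 →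
    ∃ j : ℕ, MapsLocalArm (H.f^[n * j]) z C C'

/-- `z` is the characteristic point of an evil periodic orbit of branch points of
exact period `n`. -/
def IsEvilOrbit (z : X) (n : ℕ) : Prop :=
  ExactPeriod H.f z n ∧ (∀ k : ℕ, IsBranchPt (H.f^[k] z)) ∧
    H.IsCharacteristic z ∧ ¬ ArmsTransitive H.f n z

/-- `x` is precritical with `Step(x) = k`: `k ≥ 1` is minimal with `f^[k] x = c₁`. -/
def Step (x : X) (k : ℕ) : Prop :=
  1 ≤ k ∧ H.f^[k] x = H.c1 ∧ ∀ j, 1 ≤ j → j < k → H.f^[j] x ≠ H.c1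

/-- `x` is the closest precritical point `ζ_k`. -/
def IsClosestPrecritical (x : X) (k : ℕ) : Prop :=
  H.Step x k ∧ ∀ j, 1 ≤ j → j < k → H.c1 ∉ H.f^[j] '' (H.arc H.c1 x)

/-- `x` is the earliest precritical point on the set `A`, with `Step(x) = k`:
it is a precritical point on `A` of minimal Step. -/
def IsEarliestPrecriticalOn (A : Set X) (x : X) (k : ℕ) : Prop :=
  x ∈ A ∧ H.Step x k ∧ ∀ y ∈ A, ∀ j : ℕ, H.Step y j → k ≤ j

/-- Marked points: branch points and points of the critical orbit. -/
def MarkedPt (x : X) : Prop :=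
  IsBranchPt x ∨ ∃ k : ℕ, H.f^[k] H.c0 = x

/-- Two marked points are joined by an edge if the arc between them contains no
further marked point. -/
def IsEdge (x y : X) : Prop :=
  H.MarkedPt x ∧ H.MarkedPt y ∧ x ≠ y ∧
    ∀ w ∈ H.arc x y, H.MarkedPt w → w = x ∨ w = y

/-- Equivalence of Hubbard trees: a bijection between the marked points which
conjugates the dynamics and preserves edges. -/
def Equivalent {Y : Type*} [TopologicalSpace Y] (H' : HubbardTree Y) : Prop :=
  ∃ φ : X → Y,
    (∀ x : X, H.MarkedPt x → H'.MarkedPt (φ x)) ∧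
    (∀ x x' : X, H.MarkedPt x → H.MarkedPt x' → φ x = φ x' → x = x') ∧
    (∀ y : Y, H'.MarkedPt y → ∃ x : X, H.MarkedPt x ∧ φ x = y) ∧
    φ H.c0 = H'.c0 ∧
    (∀ x : X, H.MarkedPt x → φ (H.f x) = H'.f (φ x)) ∧
    (∀ x x' : X, H.MarkedPt x → H.MarkedPt x' →
      (H.IsEdge x x' ↔ H'.IsEdge (φ x) (φ x')))

end HubbardTree

/-! ### Combinatorics of kneading sequences -/

/-- The function `ρ_ν(n) = inf { k > n : ν_k ≠ ν_{k-n} } ∈ ℕ ∪ {∞}` (sequences are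
1-indexed). -/
noncomputable def rho (ν : ℕ → Sym) (n : ℕ) : ℕ∞ :=
  sInf {e : ℕ∞ | ∃ j : ℕ, e = (j : ℕ∞) ∧ n < j ∧ ν j ≠ ν (j - n)}

/-- `RhoOrbit ν k m` means that `m` belongs to the `ρ`-orbit
`k → ρ(k) → ρ(ρ(k)) → ⋯` of `k` (stopped before reaching `∞`). -/
inductive RhoOrbit (ν : ℕ → Sym) : ℕ → ℕ → Prop
  | refl (k : ℕ) : RhoOrbit ν k k
  | step {k m j : ℕ} : RhoOrbit ν k m → rho ν m = (j : ℕ∞) → RhoOrbit ν k j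

/-- `m` occurs in the internal address `1 → ρ(1) → ρ(ρ(1)) → ⋯` of `ν`. -/
def InternalAddress (ν : ℕ → Sym) (m : ℕ) : Prop := RhoOrbit ν 1 m

/-- `ν` is a `*`-periodic kneading sequence of (exact) period `n`:
`ν = overline(1 ν₂ … ν_{n-1} *)`. -/
def StarPeriodic (ν : ℕ → Sym) (n : ℕ) : Prop :=
  2 ≤ n ∧ ν 1 = Sym.one ∧ ν n = Sym.star ∧
    (∀ k, 1 ≤ k → ν (k + n) = ν k) ∧
    (∀ k, 1 ≤ k → k < n → ν k ≠ Sym.star)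

/-- `ν` fails the admissibility condition for period `m`. -/
def FailsAdmissibility (ν : ℕ → Sym) (m : ℕ) : Prop :=
  1 ≤ m ∧
  ¬ InternalAddress ν m ∧
  (∀ k : ℕ, k ∣ m → 1 ≤ k → k < m → rho ν k ≤ (m : ℕ∞)) ∧
  ∃ R r : ℕ, rho ν m = (R : ℕ∞) ∧ 1 ≤ r ∧ r ≤ m ∧ r ≡ R [MOD m] ∧ RhoOrbit ν r m

open Classical in
/-- The number `q(m)` of arms predicted by the kneading sequence, where
`ρ(m) = R < ∞` and `r ∈ {1,…,m}` is congruent to `R` modulo `m`. -/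
noncomputable def qArms (ν : ℕ → Sym) (m R r : ℕ) : ℕ :=
  if RhoOrbit ν r m then (R - r) / m + 1 else (R - r) / m + 2


/-! ### Embeddings into the plane and cyclic order of arms -/

/-- Three points in the plane are in (strictly) counterclockwise position. -/
def Ccw (p q r : ℝ × ℝ) : Prop :=
  0 < (q.1 - p.1) * (r.2 - p.2) - (q.2 - p.2) * (r.1 - p.1)

namespace HubbardTree

variable {X : Type*} [TopologicalSpace X] (H : HubbardTree X)

/-- Under an embedding `φ` of the tree into the plane, `p` is a first exit point of
the arm `C` at `x` through the circle of radius `ε` around `φ x`: `p = φ y` for a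
point `y ∈ C` at distance exactly `ε`, such that the arc from `x` to `y` stays
within distance `< ε` before reaching `y`. -/
def ExitPt (φ : X → ℝ × ℝ) (x : X) (C : Set X) (ε : ℝ) (p : ℝ × ℝ) : Prop :=
  ∃ y ∈ C, φ y = p ∧ dist (φ x) p = ε ∧
    ∀ z ∈ H.arc x y, z ≠ y → dist (φ x) (φ z) < ε

/-- The local arms at `x` represented by the arms `C, C', C''` are in
counterclockwise cyclic order under the embedding `φ`. -/
def ArmsCcw (φ : X → ℝ × ℝ) (x : X) (C C' C'' : Set X) : Prop :=
  ∃ ε₀ : ℝ, 0 < ε₀ ∧ ∀ ε : ℝ, 0 < ε → ε < ε₀ →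
    ∀ p p' p'' : ℝ × ℝ, H.ExitPt φ x C ε p → H.ExitPt φ x C' ε p' →
      H.ExitPt φ x C'' ε p'' → Ccw p p' p''

/-- `f` respects the cyclic order (induced by the embedding `φ`) of the local arms
at all branch points. -/
def RespectsCyclicOrder (φ : X → ℝ × ℝ) : Prop :=
  ∀ x : X, IsBranchPt x →
    ∀ C C' C'' : Set X, C ∈ arms x → C' ∈ arms x → C'' ∈ arms x →
      C ≠ C' → C' ≠ C'' → C ≠ C'' → H.ArmsCcw φ x C C' C'' →
      ∀ D D' D'' : Set X, MapsLocalArm H.f x C D → MapsLocalArm H.f x C' D' →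
        MapsLocalArm H.f x C'' D'' → H.ArmsCcw φ (H.f x) D D' D''

/-- The Hubbard tree can be topologically embedded into the plane `ℝ²` so that `f`
respects the cyclic order of the local arms at all branch points. -/
def PlanarEmbeddable : Prop :=
  ∃ φ : X → ℝ × ℝ, Topology.IsEmbedding φ ∧ H.RespectsCyclicOrder φ

end HubbardTree

/-!
Transport an arm `C` at `z` along the orbit of `z`. Suppose the transported arm contains `c₀` at
some time before returning to `z`. The next arm then contains `c₁`. An arm at another orbit point
that contains `c₁` also contains `z`, since the characteristic point `z` separates `c₁` from that
point; and an orbit point in an arm stays in the image arm as long as the arm avoids `c₀`. Hence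
upon return the arm contains `c₁` or a point of the orbit, that is, it is the arm of `c₁` or the
arm of `c₀`.

Every arm does meet `c₀` eventually: it contains an endpoint `e` of the tree, and by expansivity
some iterate of `[z, e]` covers `c₀`, while these iterates remain arcs inside the transported arms
up to that time. So the first return map permutes the finitely many arms at `z`, and each of its
cycles contains the arm of `c₁` or the arm of `c₀`. The arm of `c₀` itself returns to one of these
two, so either there is a single cycle, or the arm of `c₀` is fixed and the others form a single
cycle.
-/

open Set Topology Function

section Arms

variable {X : Type*} [TopologicalSpace X] {x y p q : X} {C D : Set X}

theorem armTo_mem_arms (h : y ≠ x) : armTo x y ∈ arms x := ⟨y, h, rfl⟩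

theorem mem_armTo (h : y ≠ x) : y ∈ armTo x y := mem_connectedComponentIn h

theorem notMem_armTo_self (x y : X) : x ∉ armTo x y :=
  fun h ↦ connectedComponentIn_subset _ _ h rfl

theorem armTo_self (x : X) : armTo x x = ∅ := connectedComponentIn_eq_empty (by simp)

theorem eq_armTo_of_mem (hC : C ∈ arms x) (hp : p ∈ C) : C = armTo x p := by
  obtain ⟨y, -, rfl⟩ := hC
  exact connectedComponentIn_eq hp

theorem arms_eq_of_mem (hC : C ∈ arms x) (hD : D ∈ arms x) (hpC : p ∈ C) (hpD : p ∈ D) : C = D :=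
  (eq_armTo_of_mem hC hpC).trans (eq_armTo_of_mem hD hpD).symm

theorem notMem_of_mem_arms (hC : C ∈ arms x) : x ∉ C := by
  obtain ⟨y, -, rfl⟩ := hC
  exact notMem_armTo_self x y

theorem ne_of_mem_of_mem_arms (hC : C ∈ arms x) (hp : p ∈ C) : p ≠ x :=
  fun h ↦ notMem_of_mem_arms hC (h ▸ hp)

theorem nonempty_of_mem_arms (hC : C ∈ arms x) : C.Nonempty := by
  obtain ⟨y, hy, rfl⟩ := hC
  exact ⟨y, mem_armTo hy⟩

theorem isPreconnected_of_mem_arms (hC : C ∈ arms x) : IsPreconnected C := by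
  obtain ⟨y, -, rfl⟩ := hC
  exact isPreconnected_connectedComponentIn

theorem mem_of_isPreconnected_of_mem_arms {S : Set X} (hC : C ∈ arms x) (hp : p ∈ C)
    (hS : IsPreconnected S) (hpS : p ∈ S) (hqS : q ∈ S) (hxS : x ∉ S) : q ∈ C := by
  rw [eq_armTo_of_mem hC hp]
  exact hS.subset_connectedComponentIn hpS (subset_compl_singleton_iff.2 hxS) hqS

theorem closure_subset_insert_of_mem_arms (hC : C ∈ arms x) : closure C ⊆ insert x C := by
  intro q hq
  rcases eq_or_ne q x with rfl | hqx
  · exact mem_insert q C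
  obtain ⟨y, hy⟩ := nonempty_of_mem_arms hC
  have hconn : IsPreconnected (insert q C) := (isPreconnected_of_mem_arms hC).subset_closure
    (subset_insert q C) (insert_subset hq subset_closure)
  have hx : x ∉ insert q C := by
    rintro (h | h)
    exacts [hqx h.symm, notMem_of_mem_arms hC h]
  exact mem_insert_of_mem x <| mem_of_isPreconnected_of_mem_arms hC hy hconn
    (mem_insert_of_mem q hy) (mem_insert q C) hx

theorem isOpen_of_mem_arms [T1Space X] (hfin : (arms x).Finite) (hC : C ∈ arms x) : IsOpen C := by
  have hclosed : IsClosed ({x} ∪ ⋃ D ∈ arms x \ {C}, closure D) :=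
    isClosed_singleton.union <|
      (hfin.subset sdiff_subset).isClosed_biUnion fun _ _ ↦ isClosed_closure
  convert hclosed.isOpen_compl
  ext p
  simp only [mem_compl_iff, mem_union, mem_singleton_iff, mem_iUnion, not_or, not_exists]
  refine ⟨fun hp ↦ ⟨ne_of_mem_of_mem_arms hC hp, fun D hD hpD ↦ ?_⟩, fun ⟨hpx, hp⟩ ↦ ?_⟩
  · rcases closure_subset_insert_of_mem_arms hD.1 hpD with h | h
    · exact ne_of_mem_of_mem_arms hC hp h
    · exact hD.2 (arms_eq_of_mem hD.1 hC h hp)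
  · by_contra hpC
    refine hp (armTo x p) ⟨armTo_mem_arms hpx, fun h ↦ hpC ?_⟩ (subset_closure (mem_armTo hpx))
    exact h ▸ mem_armTo hpx

theorem isOpen_armTo [T1Space X] (hfin : (arms x).Finite) (y : X) : IsOpen (armTo x y) := by
  rcases eq_or_ne y x with rfl | hyx
  · exact armTo_self y ▸ isOpen_empty
  · exact isOpen_of_mem_arms hfin (armTo_mem_arms hyx)

/-! The relation `b ∉ armTo a x` says that `b` lies at or behind `a` as seen from `x`. -/

theorem notMem_armTo_trans {a b d : X} (hab : b ∉ armTo a x) (hbd : d ∉ armTo b x) :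
    d ∉ armTo a x := by
  intro hd
  rcases eq_or_ne x a with rfl | hxa
  · simp [armTo_self] at hd
  · exact hbd <| isPreconnected_connectedComponentIn.subset_connectedComponentIn
      (mem_armTo hxa) (subset_compl_singleton_iff.2 hab) hd

end Arms

section Parametrization

variable {X : Type*} [TopologicalSpace X] {γ δ : ℝ → X} {a b d t : ℝ} {x y w : X}

/-- `γ` traverses an arc from `x` to `y` as the parameter runs from `a` to `b`. The case `a = b` is
allowed, so that one-point arcs are parametrized as well. -/
structure IsParam (γ : ℝ → X) (a b : ℝ) (x y : X) : Prop where
  le : a ≤ b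
  continuous : Continuous γ
  injOn : InjOn γ (Icc a b)
  left : γ a = x
  right : γ b = y

theorem IsArcBetween.exists_isParam {A : Set X} (hA : IsArcBetween A x y) (a : ℝ) :
    ∃ b γ, IsParam γ a b x y := by
  rcases hA with ⟨rfl, -⟩ | ⟨-, γ, hγ, -⟩
  · exact ⟨a, fun _ ↦ x, le_rfl, continuous_const, by simp, rfl, rfl⟩
  · refine ⟨a + 1, fun t ↦ γ.extend (t - a), by linarith, by fun_prop, fun s hs t ht hst ↦ ?_,
      by simp, by simp⟩
    have hmem {r : ℝ} (hr : r ∈ Icc a (a + 1)) : r - a ∈ Icc (0 : ℝ) 1 :=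
      ⟨by linarith [hr.1], by linarith [hr.2]⟩
    simp only [Path.extend_apply _ (hmem hs), Path.extend_apply _ (hmem ht)] at hst
    simpa using hγ.injective hst

namespace IsParam

theorem isArcBetween [T2Space X] (h : IsParam γ a b x y) :
    IsArcBetween (γ '' Icc a b) x y := by
  obtain ⟨hle, hcont, hinj, rfl, rfl⟩ := h
  rcases hle.eq_or_lt with rfl | hlt
  · exact .inl ⟨rfl, by simp⟩
  let e := (iccHomeoI a b hlt).symm
  have he : Continuous ((Icc a b).domRestrict γ ∘ e) :=
    (hcont.comp continuous_subtype_val).comp e.continuous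
  refine .inr ⟨fun h ↦ hlt.ne (hinj (left_mem_Icc.2 hle) (right_mem_Icc.2 hle) h),
    ⟨⟨(Icc a b).domRestrict γ ∘ e, he⟩, by simp [e], by simp [e]⟩, ?_, ?_⟩
  · exact (he.isClosedEmbedding ((injOn_iff_injective.1 hinj).comp e.injective)).isEmbedding
  · exact (e.surjective.range_comp _).trans (range_domRestrict γ _)

theorem restrict_left (h : IsParam γ a b x y) (ht : t ∈ Icc a b) : IsParam γ a t x (γ t) :=
  ⟨ht.1, h.continuous, h.injOn.mono (Icc_subset_Icc_right ht.2), h.left, rfl⟩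

theorem restrict_right (h : IsParam γ a b x y) (ht : t ∈ Icc a b) : IsParam γ t b (γ t) y :=
  ⟨ht.2, h.continuous, h.injOn.mono (Icc_subset_Icc_left ht.1), rfl, h.right⟩

theorem reverse (h : IsParam γ a b x y) : IsParam (fun t ↦ γ (-t)) (-b) (-a) y x where
  le := neg_le_neg h.le
  continuous := h.continuous.comp continuous_neg
  injOn := h.injOn.comp neg_injective.injOn fun _ ht ↦
    ⟨le_neg_of_le_neg ht.2, neg_le_of_neg_le ht.1⟩
  left := by simp [h.right]
  right := by simp [h.left]

theorem comp {Y : Type*} [TopologicalSpace Y] {g : X → Y} (hg : Continuous g)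
    (h : IsParam γ a b x y) (hinj : InjOn g (γ '' Icc a b)) :
    IsParam (g ∘ γ) a b (g x) (g y) :=
  ⟨h.le, hg.comp h.continuous, hinj.comp h.injOn (mapsTo_image _ _), congrArg g h.left,
    congrArg g h.right⟩

theorem trans (hγ : IsParam γ a b x y) (hδ : IsParam δ b d y w)
    (hdisj : ∀ s ∈ Icc a b, ∀ t ∈ Ioc b d, γ s ≠ δ t) :
    IsParam (fun t ↦ if t ≤ b then γ t else δ t) a d x w := by
  set h : ℝ → X := fun t ↦ if t ≤ b then γ t else δ t with hdef
  have hleft : EqOn h γ (Icc a b) := fun t ht ↦ if_pos ht.2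
  have hright : EqOn h δ (Ioc b d) := fun t ht ↦ if_neg ht.1.not_ge
  refine ⟨hγ.le.trans hδ.le, ?_, ?_, ?_, ?_⟩
  · refine hγ.continuous.if_le hδ.continuous continuous_id continuous_const ?_
    rintro t rfl
    exact hγ.right.trans hδ.left.symm
  · rw [← Icc_union_Ioc_eq_Icc hγ.le hδ.le,
      injOn_union (disjoint_left.2 fun t ht ht' ↦ ht'.1.not_ge ht.2)]
    refine ⟨hγ.injOn.congr hleft.symm, (hδ.injOn.mono Ioc_subset_Icc_self).congr hright.symm,
      fun s hs t ht ↦ ?_⟩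
    rw [hleft hs, hright ht]
    exact hdisj s hs t ht
  · rw [hleft (left_mem_Icc.2 hγ.le), hγ.left]
  · rcases hδ.le.eq_or_lt with rfl | hlt
    · rw [hleft (right_mem_Icc.2 hγ.le), hγ.right, ← hδ.left, hδ.right]
    · rw [hright (right_mem_Ioc.2 hlt), hδ.right]

end IsParam

end Parametrization

/-- The arcs of a uniquely arcwise connected space. -/
structure UniqueArcs (X : Type*) [TopologicalSpace X] where
  arc : X → X → Set X
  arc_isArc : ∀ x y, IsArcBetween (arc x y) x y
  arc_unique : ∀ x y A, IsArcBetween A x y → A = arc x y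

namespace UniqueArcs

variable {X : Type*} [TopologicalSpace X]

theorem exists_isParam (T : UniqueArcs X) (x y : X) (a : ℝ) : ∃ b γ, IsParam γ a b x y :=
  (T.arc_isArc x y).exists_isParam a

variable (T : UniqueArcs X) {x y p q r : X}

theorem arc_self (x : X) : T.arc x x = {x} := (T.arc_unique x x {x} (.inl ⟨rfl, rfl⟩)).symm

variable [T2Space X]

theorem image_eq_arc {γ : ℝ → X} {a b : ℝ} (h : IsParam γ a b x y) : γ '' Icc a b = T.arc x y :=
  T.arc_unique x y _ h.isArcBetween

theorem arc_comm (x y : X) : T.arc x y = T.arc y x := by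
  obtain ⟨b, γ, hγ⟩ := T.exists_isParam x y 0
  rw [← T.image_eq_arc hγ, ← T.image_eq_arc hγ.reverse, ← neg_Icc, ← image_neg_eq_neg, image_image]
  simp only [neg_neg]

theorem left_mem_arc (x y : X) : x ∈ T.arc x y := by
  obtain ⟨b, γ, hγ⟩ := T.exists_isParam x y 0
  exact T.image_eq_arc hγ ▸ ⟨0, left_mem_Icc.2 hγ.le, hγ.left⟩

theorem right_mem_arc (x y : X) : y ∈ T.arc x y := T.arc_comm y x ▸ T.left_mem_arc y x

theorem isClosed_arc (x y : X) : IsClosed (T.arc x y) := by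
  obtain ⟨b, γ, hγ⟩ := T.exists_isParam x y 0
  exact T.image_eq_arc hγ ▸ (isCompact_Icc.image hγ.continuous).isClosed

theorem isPreconnected_arc (x y : X) : IsPreconnected (T.arc x y) := by
  obtain ⟨b, γ, hγ⟩ := T.exists_isParam x y 0
  exact T.image_eq_arc hγ ▸ isPreconnected_Icc.image γ hγ.continuous.continuousOn

theorem arc_union_arc_of_mem (hp : p ∈ T.arc x y) : T.arc x p ∪ T.arc p y = T.arc x y := by
  obtain ⟨b, γ, hγ⟩ := T.exists_isParam x y 0
  obtain ⟨t, ht, rfl⟩ := T.image_eq_arc hγ ▸ hp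
  rw [← T.image_eq_arc hγ, ← T.image_eq_arc (hγ.restrict_left ht),
    ← T.image_eq_arc (hγ.restrict_right ht), ← image_union, Icc_union_Icc_eq_Icc ht.1 ht.2]

theorem arc_inter_arc_of_mem (hp : p ∈ T.arc x y) : T.arc x p ∩ T.arc p y = {p} := by
  obtain ⟨b, γ, hγ⟩ := T.exists_isParam x y 0
  obtain ⟨t, ht, rfl⟩ := T.image_eq_arc hγ ▸ hp
  rw [← T.image_eq_arc (hγ.restrict_left ht), ← T.image_eq_arc (hγ.restrict_right ht),
    ← hγ.injOn.image_inter (Icc_subset_Icc_right ht.2) (Icc_subset_Icc_left ht.1),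
    Icc_inter_Icc_eq_singleton ht.1 ht.2, image_singleton]

theorem arc_subset_arc_left (hp : p ∈ T.arc x y) : T.arc x p ⊆ T.arc x y :=
  subset_union_left.trans (T.arc_union_arc_of_mem hp).subset

theorem arc_subset_arc_right (hp : p ∈ T.arc x y) : T.arc p y ⊆ T.arc x y :=
  subset_union_right.trans (T.arc_union_arc_of_mem hp).subset

theorem left_notMem_arc_of_mem (hp : p ∈ T.arc x y) (hpx : p ≠ x) : x ∉ T.arc p y :=
  fun hx ↦ hpx.symm <| (T.arc_inter_arc_of_mem hp).subset ⟨T.left_mem_arc x p, hx⟩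

theorem exists_first_mem_arc {K : Set X} (hK : IsClosed K) (hp : p ∈ T.arc x y) (hpK : p ∈ K) :
    ∃ r ∈ T.arc x y, r ∈ K ∧ T.arc x r ∩ K ⊆ {r} := by
  obtain ⟨b, γ, hγ⟩ := T.exists_isParam x y 0
  obtain ⟨s, hs, rfl⟩ := T.image_eq_arc hγ ▸ hp
  obtain ⟨t, ⟨ht, htK⟩, hmin⟩ :=
    (isCompact_Icc.inter_right (hK.preimage hγ.continuous)).exists_isLeast ⟨s, hs, hpK⟩
  refine ⟨γ t, T.image_eq_arc hγ ▸ ⟨t, ht, rfl⟩, htK, ?_⟩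
  rw [← T.image_eq_arc (hγ.restrict_left ht)]
  rintro _ ⟨⟨u, hu, rfl⟩, huK⟩
  have htu : t ≤ u := hmin ⟨⟨hu.1, hu.2.trans ht.2⟩, huK⟩
  exact congrArg γ (hu.2.antisymm htu)

theorem arc_eq_union (hr : T.arc p r ∩ T.arc r q ⊆ {r}) :
    T.arc p q = T.arc p r ∪ T.arc r q := by
  suffices r ∈ T.arc p q from (T.arc_union_arc_of_mem this).symm
  obtain ⟨b, γ, hγ⟩ := T.exists_isParam p r 0
  obtain ⟨d, δ, hδ⟩ := T.exists_isParam r q b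
  have hdisj : ∀ s ∈ Icc 0 b, ∀ t ∈ Ioc b d, γ s ≠ δ t := fun s hs t ht hst ↦ by
    have hδt : δ t = r := hr ⟨hst ▸ T.image_eq_arc hγ ▸ mem_image_of_mem γ hs,
      T.image_eq_arc hδ ▸ mem_image_of_mem δ (Ioc_subset_Icc_self ht)⟩
    exact ht.1.ne' <| hδ.injOn (Ioc_subset_Icc_self ht) (left_mem_Icc.2 hδ.le)
      (hδt.trans hδ.left.symm)
  rw [← T.image_eq_arc (hγ.trans hδ hdisj)]
  exact ⟨b, ⟨hγ.le, hδ.le⟩, by simp [hγ.right]⟩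

theorem arc_subset_union (p r q : X) : T.arc p q ⊆ T.arc p r ∪ T.arc r q := by
  obtain ⟨s, hs, hsK, hfirst⟩ :=
    T.exists_first_mem_arc (T.isClosed_arc r q) (T.right_mem_arc p r) (T.left_mem_arc r q)
  rw [T.arc_eq_union (r := s) fun u hu ↦ hfirst ⟨hu.1, T.arc_subset_arc_right hsK hu.2⟩]
  exact union_subset_union (T.arc_subset_arc_left hs) (T.arc_subset_arc_right hsK)

theorem image_arc {g : X → X} (hg : Continuous g) (hinj : InjOn g (T.arc x y)) :
    g '' T.arc x y = T.arc (g x) (g y) := by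
  obtain ⟨b, γ, hγ⟩ := T.exists_isParam x y 0
  rw [← T.image_eq_arc hγ] at hinj ⊢
  rw [← T.image_eq_arc (hγ.comp hg hinj), image_comp]

variable {C : Set X}

theorem mem_of_mem_arc (hC : C ∈ arms x) (hy : y ∈ C) (hq : q ∈ T.arc x y) (hqx : q ≠ x) : q ∈ C :=
  mem_of_isPreconnected_of_mem_arms hC hy (T.isPreconnected_arc q y) (T.right_mem_arc q y)
    (T.left_mem_arc q y) (T.left_notMem_arc_of_mem hq hqx)

theorem exists_mem_arc_inter_of_mem_nhds (hyx : y ≠ x) {U : Set X} (hU : U ∈ 𝓝 x) :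
    ∃ q ∈ T.arc x y ∩ U, q ≠ x := by
  have hacc : AccPt x (Filter.principal (T.arc x y)) :=
    (T.isPreconnected_arc x y).preperfect_of_nontrivial
      ⟨x, T.left_mem_arc x y, y, T.right_mem_arc x y, hyx.symm⟩ x (T.left_mem_arc x y)
  exact inter_comm U _ ▸ accPt_iff_nhds.1 hacc U hU

theorem mem_closure_of_mem_arms (T : UniqueArcs X) (hC : C ∈ arms x) : x ∈ closure C := by
  refine mem_closure_iff_nhds.2 fun U hU ↦ ?_
  obtain ⟨y, hy⟩ := nonempty_of_mem_arms hC
  obtain ⟨q, ⟨hq, hqU⟩, hqx⟩ :=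
    T.exists_mem_arc_inter_of_mem_nhds (ne_of_mem_of_mem_arms hC hy) hU
  exact ⟨q, hqU, T.mem_of_mem_arc hC hy hq hqx⟩

theorem mem_armTo_of_notMem (T : UniqueArcs X) {a m : X} (hmx : m ≠ x) (ham : a ≠ m)
    (ha : a ∉ armTo m x) : m ∈ armTo a x := by
  have hconn : IsPreconnected (insert m (armTo m x)) :=
    isPreconnected_connectedComponentIn.subset_closure (subset_insert _ _) <|
      insert_subset (T.mem_closure_of_mem_arms (armTo_mem_arms hmx.symm)) subset_closure
  refine hconn.subset_connectedComponentIn (mem_insert_of_mem m (mem_armTo hmx.symm)) ?_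
    (mem_insert m _)
  exact subset_compl_singleton_iff.2 fun h ↦ h.elim ham ha

theorem eventually_arc_subset_of_mem_arc {U : Set X} (hU : U ∈ 𝓝 x) (e : X) :
    ∀ᶠ p in 𝓝 x, p ∈ T.arc x e → T.arc x p ⊆ U := by
  by_cases hsub : T.arc x e ⊆ interior U
  · exact .of_forall fun p hp ↦ (T.arc_subset_arc_left hp).trans (hsub.trans interior_subset)
  obtain ⟨s, hs, hsU⟩ := not_subset.1 hsub
  obtain ⟨r, hr, hrU, hfirst⟩ := T.exists_first_mem_arc isOpen_interior.isClosed_compl hs hsU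
  have hrx : r ≠ x := fun h ↦ hrU (h ▸ mem_interior_iff_mem_nhds.2 hU)
  filter_upwards [(T.isClosed_arc r e).isOpen_compl.mem_nhds (T.left_notMem_arc_of_mem hr hrx)]
    with p hp hpe
  have hpr : p ∈ T.arc x r := (T.arc_union_arc_of_mem hr ▸ hpe).resolve_right hp
  by_contra hnot
  obtain ⟨q, hq, hqU⟩ := not_subset.1 hnot
  obtain rfl : q = r :=
    hfirst ⟨T.arc_subset_arc_left hpr hq, fun h ↦ hqU (interior_subset h)⟩
  obtain rfl : q = p := (T.arc_inter_arc_of_mem hpr).subset ⟨hq, T.right_mem_arc p q⟩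
  exact hp (T.left_mem_arc q e)

end UniqueArcs

theorem exists_maximal_of_isClosed_setOf {X : Type*} [TopologicalSpace X] [CompactSpace X]
    {r : X → X → Prop} (hrefl : ∀ a, r a a) (htrans : ∀ {a b d}, r a b → r b d → r a d)
    (hclosed : ∀ a, IsClosed {b | r a b}) (a : X) : ∃ m, r a m ∧ ∀ b, r m b → r b m := by
  have : Nonempty {b // r a b} := ⟨a, hrefl a⟩
  obtain ⟨⟨m, ham⟩, hmax⟩ : ∃ m : {b // r a b}, ∀ b : {b // r a b}, r m b → r b m := by
    refine exists_maximal_of_nonempty_chains_bounded (fun c hc hne ↦ ?_) htrans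
    have := hne.to_subtype
    have hdir : Directed (· ⊇ ·) fun b : c ↦ {d | r b d} := fun b b' ↦ by
      rcases eq_or_ne b.1 b'.1 with h | h
      · exact ⟨b, subset_rfl, (congrArg (fun e : {b // r a b} ↦ {d | r e d}) h).subset⟩
      · rcases hc b.2 b'.2 h with hbb' | hb'b
        · exact ⟨b', fun d hd ↦ htrans hbb' hd, subset_rfl⟩
        · exact ⟨b, subset_rfl, fun d hd ↦ htrans hb'b hd⟩
    obtain ⟨u, hu⟩ := IsCompact.nonempty_iInter_of_directed_nonempty_isCompact_isClosed _ hdir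
      (fun b ↦ ⟨b, hrefl _⟩) (fun b ↦ (hclosed _).isCompact) fun b ↦ hclosed _
    have hub (b : c) : r b u := mem_iInter.1 hu b
    obtain ⟨b, hb⟩ := hne
    exact ⟨⟨u, htrans b.2 (hub ⟨b, hb⟩)⟩, fun b hb ↦ hub ⟨b, hb⟩⟩
  exact ⟨m, ham, fun b hmb ↦ hmax ⟨b, htrans ham hmb⟩ hmb⟩

/-- The structure of a finite topological tree on a compact Hausdorff space: unique arcs, finitely
many endpoints, and finitely many arms at every point. -/
structure FiniteTree (X : Type*) [TopologicalSpace X] extends UniqueArcs X where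
  arms_finite : ∀ x : X, (arms x).Finite
  endpoint_finite : {x : X | IsEndpoint x}.Finite

namespace FiniteTree

variable {X : Type*} [TopologicalSpace X] [CompactSpace X] [T2Space X] (T : FiniteTree X)
  {x y p q : X} {C : Set X}

theorem exists_isEndpoint_mem_arc (hyx : y ≠ x) : ∃ e, IsEndpoint e ∧ y ∈ T.arc x e := by
  -- The required endpoint is a point behind `y`, as seen from `x`, that is as far away as possible.
  obtain ⟨e, hye, hmax⟩ := exists_maximal_of_isClosed_setOf (r := fun a b ↦ b ∉ armTo a x)
    (fun a ↦ notMem_armTo_self a x) notMem_armTo_trans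
    (fun a ↦ (isOpen_armTo (T.arms_finite a) x).isClosed_compl) y
  have hex : e ≠ x := by
    rintro rfl
    exact hye (mem_armTo hyx.symm)
  refine ⟨e, ncard_eq_one.2 ⟨armTo e x, ?_⟩, ?_⟩
  · refine eq_singleton_iff_unique_mem.2 ⟨armTo_mem_arms hex.symm, fun C hC ↦ ?_⟩
    obtain ⟨b, hb⟩ := nonempty_of_mem_arms hC
    suffices b ∈ armTo e x from arms_eq_of_mem hC (armTo_mem_arms hex.symm) hb this
    by_contra hbe
    exact hmax b hbe (T.mem_armTo_of_notMem hex (ne_of_mem_of_mem_arms hC hb) hbe)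
  · by_contra hy
    exact hye <| (T.isPreconnected_arc x e).subset_connectedComponentIn (T.left_mem_arc x e)
      (subset_compl_singleton_iff.2 hy) (T.right_mem_arc x e)

theorem exists_isEndpoint_mem_of_mem_arms (T : FiniteTree X) (hC : C ∈ arms x) :
    ∃ e ∈ C, IsEndpoint e := by
  obtain ⟨y, hy⟩ := nonempty_of_mem_arms hC
  have hyx := ne_of_mem_of_mem_arms hC hy
  obtain ⟨e, he, hye⟩ := T.exists_isEndpoint_mem_arc hyx
  refine ⟨e, ?_, he⟩
  exact mem_of_isPreconnected_of_mem_arms hC hy (T.isPreconnected_arc y e) (T.left_mem_arc y e)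
    (T.right_mem_arc y e) (T.left_notMem_arc_of_mem hye hyx)

theorem eventually_arc_subset {U : Set X} (hU : U ∈ 𝓝 x) : ∀ᶠ p in 𝓝 x, T.arc x p ⊆ U := by
  filter_upwards [(Filter.eventually_all_finite T.endpoint_finite).2 fun e _ ↦
    T.eventually_arc_subset_of_mem_arc hU e] with p hp
  rcases eq_or_ne p x with rfl | hpx
  · exact T.arc_self p ▸ singleton_subset_iff.2 (mem_of_mem_nhds hU)
  · obtain ⟨e, he, hpe⟩ := T.exists_isEndpoint_mem_arc hpx
    exact hp e he hpe

theorem notMem_arc_of_mem_arms (hC : C ∈ arms x) (hp : p ∈ C) (hq : q ∈ C) : x ∉ T.arc p q := by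
  refine (isPreconnected_of_mem_arms hC).induction₂ (fun p q ↦ x ∉ T.arc p q) (fun p hp ↦ ?_)
    (fun p r q _ _ _ hpr hrq h ↦ (T.arc_subset_union p r q h).elim hpr hrq)
    (fun p q _ _ h ↦ T.arc_comm p q ▸ h) hp hq
  have hx : {x}ᶜ ∈ 𝓝 p := isOpen_compl_singleton.mem_nhds (ne_of_mem_of_mem_arms hC hp)
  filter_upwards [mem_nhdsWithin_of_mem_nhds (T.eventually_arc_subset hx)] with q hq hxq
  exact hq hxq rfl

end FiniteTree

section LocallyInjective

variable {Y : Type*} [TopologicalSpace Y]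

theorem eventually_injOn_Icc_of_injOn [T2Space Y] {h : ℝ → Y} {a b t : ℝ} {U : Set ℝ}
    (hh : Continuous h) (htb : t < b) (hinj : InjOn h (Icc a t)) (hU : U ∈ 𝓝 t)
    (hUinj : InjOn h (U ∩ Icc a b)) : ∀ᶠ s in 𝓝 t, InjOn h (Icc a s) := by
  obtain ⟨l, u, ⟨hlt, htu⟩, hlu⟩ := mem_nhds_iff_exists_Ioo_subset.1 hU
  have hclosed : IsClosed (h '' Icc a l) := (isCompact_Icc.image hh).isClosed
  have ht : h t ∉ h '' Icc a l := by
    rintro ⟨s, hs, hst⟩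
    have hst_le : s ≤ t := hs.2.trans hlt.le
    exact (hs.2.trans_lt hlt).ne (hinj ⟨hs.1, hst_le⟩ ⟨hs.1.trans hst_le, le_rfl⟩ hst)
  obtain ⟨l', u', ht', hlu'⟩ := mem_nhds_iff_exists_Ioo_subset.1
    (hh.continuousAt (hclosed.isOpen_compl.mem_nhds ht))
  filter_upwards [Iio_mem_nhds ht'.2, Iio_mem_nhds htu, Iio_mem_nhds htb] with s hsu' hsu hsb
  intro p hp q hq hpq
  wlog hle : p ≤ q generalizing p q
  · exact (this hq hp hpq.symm (le_of_not_ge hle)).symm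
  rcases le_or_gt q t with hqt | htq
  · exact hinj ⟨hp.1, hle.trans hqt⟩ ⟨hq.1, hqt⟩ hpq
  have hlp : l < p := lt_of_not_ge fun hpl ↦
    hlu' ⟨ht'.1.trans htq, hq.2.trans_lt hsu'⟩ ⟨p, ⟨hp.1, hpl⟩, hpq⟩
  exact hUinj ⟨hlu ⟨hlp, hp.2.trans_lt hsu⟩, hp.1, hp.2.trans hsb.le⟩
    ⟨hlu ⟨hlp.trans_le hle, hq.2.trans_lt hsu⟩, hq.1, hq.2.trans hsb.le⟩ hpq

/-- `g` is injective on some neighbourhood of `x`. -/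
def LocallyInjectiveAt {Z : Type*} (g : Y → Z) (x : Y) : Prop := ∃ U ∈ 𝓝 x, InjOn g U

theorem LocallyInjectiveAt.comp {Z W : Type*} [TopologicalSpace Z] {g : Y → Z} {k : Z → W} {x : Y}
    (hk : LocallyInjectiveAt k (g x)) (hg : LocallyInjectiveAt g x) (hcont : ContinuousAt g x) :
    LocallyInjectiveAt (k ∘ g) x := by
  obtain ⟨U, hU, hgU⟩ := hg
  obtain ⟨V, hV, hkV⟩ := hk
  exact ⟨g ⁻¹' V ∩ U, Filter.inter_mem (hcont hV) hU,
    hkV.comp (hgU.mono inter_subset_right) fun _ hp ↦ hp.1⟩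

theorem LocallyInjectiveAt.iterate {g : Y → Y} {x : Y} (hcont : Continuous g)
    (hg : ∀ k, LocallyInjectiveAt g (g^[k] x)) (n : ℕ) : LocallyInjectiveAt g^[n] x := by
  induction n with
  | zero => exact ⟨univ, Filter.univ_mem, injective_id.injOn⟩
  | succ n ih => exact iterate_succ' g n ▸ (hg n).comp ih (hcont.iterate n).continuousAt

end LocallyInjective

namespace UniqueArcs

variable {X : Type*} [TopologicalSpace X] [T2Space X] {h : ℝ → X} {a b : ℝ}

theorem apply_ne_of_injOn_Ico (T : UniqueArcs X) (hh : Continuous h) (hab : a < b)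
    (hinj : InjOn h (Ico a b)) : h a ≠ h b := by
  intro hloop
  -- Otherwise the two halves of the loop are arcs with the same endpoints.
  obtain ⟨m, ham, hmb⟩ := exists_between hab
  obtain ⟨t, hmt, htb⟩ := exists_between hmb
  have hleft : IsParam h a m (h a) (h m) :=
    ⟨ham.le, hh, hinj.mono (Icc_subset_Ico_right hmb), rfl, rfl⟩
  have hright : IsParam h m b (h m) (h a) := by
    refine ⟨hmb.le, hh, ?_, rfl, hloop.symm⟩
    rw [← Ico_insert_right hmb.le, injOn_insert right_notMem_Ico]
    refine ⟨hinj.mono (Ico_subset_Ico_left ham.le), ?_⟩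
    rintro ⟨s, hs, hsb⟩
    exact (ham.trans_le hs.1).ne
      (hinj ⟨le_rfl, hab⟩ ⟨ham.le.trans hs.1, hs.2⟩ (hloop.trans hsb.symm))
  have himage : h '' Icc a m = h '' Icc m b := by
    rw [T.image_eq_arc hleft, T.image_eq_arc hright, T.arc_comm]
  obtain ⟨s, hs, hst⟩ := himage.superset ⟨t, ⟨hmt.le, htb.le⟩, rfl⟩
  exact (hs.2.trans_lt hmt).ne
    (hinj ⟨hs.1, hs.2.trans_lt hmb⟩ ⟨ham.le.trans hmt.le, htb⟩ hst)

theorem injOn_Icc_of_injOn_Ico (T : UniqueArcs X) (hh : Continuous h) (hinj : InjOn h (Ico a b)) :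
    InjOn h (Icc a b) := by
  rcases lt_or_ge b a with hba | hab
  · simp [Icc_eq_empty_of_lt hba]
  rw [← Ico_insert_right hab, injOn_insert right_notMem_Ico]
  refine ⟨hinj, ?_⟩
  rintro ⟨s, hs, hsb⟩
  exact T.apply_ne_of_injOn_Ico hh hs.2 (hinj.mono (Ico_subset_Ico_left hs.1)) hsb

theorem isClosed_setOf_injOn_Icc (T : UniqueArcs X) (hh : Continuous h) (a : ℝ) :
    IsClosed {t | InjOn h (Icc a t)} := by
  refine isClosed_of_closure_subset fun t ht ↦ T.injOn_Icc_of_injOn_Ico hh ?_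
  intro p hp q hq hpq
  obtain ⟨s, hs, hsinj⟩ := mem_closure_iff_nhds.1 ht _ (Ioi_mem_nhds (max_lt hp.2 hq.2))
  exact hsinj ⟨hp.1, (le_max_left p q).trans (le_of_lt hs)⟩
    ⟨hq.1, (le_max_right p q).trans (le_of_lt hs)⟩ hpq

theorem injOn_Icc_of_locally_injOn (T : UniqueArcs X) (hh : Continuous h)
    (hloc : ∀ t ∈ Ico a b, ∃ U ∈ 𝓝 t, InjOn h (U ∩ Icc a b)) : InjOn h (Icc a b) := by
  rcases lt_or_ge b a with hba | hab
  · simp [Icc_eq_empty_of_lt hba]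
  refine IsClosed.Icc_subset_of_forall_exists_gt
    ((T.isClosed_setOf_injOn_Icc hh a).inter isClosed_Icc) (by simp) ?_ (right_mem_Icc.2 hab)
  rintro t ⟨htinj, ht⟩ y hty
  obtain ⟨U, hU, hUinj⟩ := hloc t ht
  have hnear := eventually_injOn_Icc_of_injOn hh ht.2 htinj hU hUinj
  exact ((hnear.filter_mono nhdsWithin_le_nhds).and (Ioc_mem_nhdsGT hty)).exists

theorem injOn_arc (T : UniqueArcs X) {g : X → X} {x y : X} (hg : Continuous g)
    (hloc : ∀ p ∈ T.arc x y, p ≠ y → LocallyInjectiveAt g p) : InjOn g (T.arc x y) := by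
  obtain ⟨b, γ, hγ⟩ := T.exists_isParam x y 0
  rw [← T.image_eq_arc hγ] at hloc ⊢
  refine InjOn.image_of_comp (T.injOn_Icc_of_locally_injOn (hg.comp hγ.continuous) fun t ht ↦ ?_)
  have hty : γ t ≠ y := fun h ↦ ht.2.ne <|
    hγ.injOn (Ico_subset_Icc_self ht) (right_mem_Icc.2 hγ.le) (h.trans hγ.right.symm)
  obtain ⟨U, hU, hgU⟩ := hloc (γ t) (mem_image_of_mem γ (Ico_subset_Icc_self ht)) hty
  exact ⟨γ ⁻¹' U, hγ.continuous.continuousAt hU,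
    hgU.comp (hγ.injOn.mono inter_subset_right) fun _ hs ↦ hs.1⟩

end UniqueArcs

section LocalArms

variable {X : Type*} [TopologicalSpace X] {g k : X → X} {x y : X} {C C' D D' : Set X}

theorem mapsLocalArm_id (hC : C ∈ arms x) : MapsLocalArm id x C C :=
  ⟨hC, hC, univ, Filter.univ_mem, by simp⟩

namespace MapsLocalArm

theorem comp (hk : MapsLocalArm k (g x) D D') (hg : MapsLocalArm g x C D)
    (hcont : ContinuousAt g x) : MapsLocalArm (k ∘ g) x C D' := by
  obtain ⟨hC, -, U, hU, hgU⟩ := hg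
  obtain ⟨-, hD', V, hV, hkV⟩ := hk
  refine ⟨hC, hD', U ∩ g ⁻¹' V, Filter.inter_mem hU (hcont hV), ?_⟩
  rintro _ ⟨p, ⟨hpC, hpU, hpV⟩, rfl⟩
  exact hkV ⟨g p, ⟨hgU ⟨p, ⟨hpC, hpU⟩, rfl⟩, hpV⟩, rfl⟩

theorem iterate (hx : g x = x) (hcont : ContinuousAt g x) {σ : arms x → arms x}
    (hσ : ∀ C : arms x, MapsLocalArm g x C (σ C)) (j : ℕ) (C : arms x) :
    MapsLocalArm g^[j] x C (σ^[j] C) := by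
  induction j with
  | zero => exact mapsLocalArm_id C.2
  | succ j ih =>
    rw [iterate_succ', iterate_succ_apply']
    refine comp ?_ ih (hcont.iterate hx j)
    rw [iterate_fixed hx]
    exact hσ _

variable [T2Space X] (T : UniqueArcs X)

theorem target_unique (T : UniqueArcs X) (hD : MapsLocalArm g x C D)
    (hD' : MapsLocalArm g x C D') : D = D' := by
  obtain ⟨hC, hDarm, U, hU, hgU⟩ := hD
  obtain ⟨-, hDarm', V, hV, hgV⟩ := hD'
  obtain ⟨p, ⟨hpU, hpV⟩, hpC⟩ :=
    mem_closure_iff_nhds.1 (T.mem_closure_of_mem_arms hC) _ (Filter.inter_mem hU hV)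
  exact arms_eq_of_mem hDarm hDarm' (hgU ⟨p, ⟨hpC, hpU⟩, rfl⟩) (hgV ⟨p, ⟨hpC, hpV⟩, rfl⟩)

theorem apply_mem (hD : MapsLocalArm g x C D) (hg : Continuous g) (hinj : InjOn g (T.arc x y))
    (hy : y ∈ C) : g y ∈ D := by
  obtain ⟨hC, hDarm, U, hU, hgU⟩ := hD
  obtain ⟨q, ⟨hq, hqU⟩, hqx⟩ :=
    T.exists_mem_arc_inter_of_mem_nhds (ne_of_mem_of_mem_arms hC hy) hU
  have hgq : g q ∈ D := hgU ⟨q, ⟨T.mem_of_mem_arc hC hy hq hqx, hqU⟩, rfl⟩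
  refine mem_of_isPreconnected_of_mem_arms hDarm hgq
    ((T.isPreconnected_arc q y).image g hg.continuousOn)
    (mem_image_of_mem g (T.left_mem_arc q y)) (mem_image_of_mem g (T.right_mem_arc q y)) ?_
  rintro ⟨r, hr, hrx⟩
  obtain rfl : r = x := hinj (T.arc_subset_arc_right hq hr) (T.left_mem_arc x y) hrx
  exact T.left_notMem_arc_of_mem hq hqx hr

end MapsLocalArm

namespace FiniteTree

variable [CompactSpace X] [T2Space X] (T : FiniteTree X)

theorem exists_mem_nhds_injOn_insert_arc (hloc : LocallyInjectiveAt g x) :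
    ∃ V ∈ 𝓝 x, ∀ p ∈ V, ∀ q ∈ V, InjOn g (insert x (T.arc p q)) := by
  obtain ⟨U, hU, hgU⟩ := hloc
  refine ⟨_, T.eventually_arc_subset hU, fun p hp q hq ↦ hgU.mono ?_⟩
  refine insert_subset (mem_of_mem_nhds hU) ((T.arc_subset_union p x q).trans ?_)
  exact union_subset (T.arc_comm p x ▸ hp) hq

theorem exists_mapsLocalArm (T : FiniteTree X) (hg : Continuous g)
    (hloc : LocallyInjectiveAt g x) (hC : C ∈ arms x) : ∃ D, MapsLocalArm g x C D := by
  obtain ⟨V, hV, hinj⟩ := T.exists_mem_nhds_injOn_insert_arc hloc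
  have hmaps {p q : X} (hp : p ∈ C ∩ V) (hq : q ∈ C ∩ V) : g x ∉ g '' T.arc p q := by
    rintro ⟨r, hr, hrx⟩
    obtain rfl : r = x :=
      hinj p hp.2 q hq.2 (mem_insert_of_mem x hr) (mem_insert x _) hrx
    exact T.notMem_arc_of_mem_arms hC hp.1 hq.1 hr
  obtain ⟨p, hpV, hpC⟩ := mem_closure_iff_nhds.1 (T.mem_closure_of_mem_arms hC) V hV
  have hpx : g p ≠ g x := fun h ↦
    hmaps ⟨hpC, hpV⟩ ⟨hpC, hpV⟩ ⟨p, T.left_mem_arc p p, h⟩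
  refine ⟨armTo (g x) (g p), hC, armTo_mem_arms hpx, V, hV, ?_⟩
  rintro _ ⟨q, hq, rfl⟩
  exact mem_of_isPreconnected_of_mem_arms (armTo_mem_arms hpx) (mem_armTo hpx)
    ((T.isPreconnected_arc p q).image g hg.continuousOn)
    (mem_image_of_mem g (T.left_mem_arc p q)) (mem_image_of_mem g (T.right_mem_arc p q))
    (hmaps ⟨hpC, hpV⟩ hq)

theorem mapsLocalArm_source_unique (T : FiniteTree X) (hg : Continuous g)
    (hloc : LocallyInjectiveAt g x) (hC : MapsLocalArm g x C D) (hC' : MapsLocalArm g x C' D) :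
    C = C' := by
  obtain ⟨V, hV, hinj⟩ := T.exists_mem_nhds_injOn_insert_arc hloc
  obtain ⟨hCarm, hD, U, hU, hgU⟩ := hC
  obtain ⟨hCarm', -, U', hU', hgU'⟩ := hC'
  obtain ⟨p, ⟨hpV, hpU⟩, hpC⟩ :=
    mem_closure_iff_nhds.1 (T.mem_closure_of_mem_arms hCarm) _ (Filter.inter_mem hV hU)
  obtain ⟨q, ⟨hqV, hqU'⟩, hqC'⟩ :=
    mem_closure_iff_nhds.1 (T.mem_closure_of_mem_arms hCarm') _ (Filter.inter_mem hV hU')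
  suffices q ∈ C from arms_eq_of_mem hCarm hCarm' this hqC'
  refine mem_of_isPreconnected_of_mem_arms hCarm hpC (T.isPreconnected_arc p q)
    (T.left_mem_arc p q) (T.right_mem_arc p q) fun hx ↦ ?_
  have hgx : g x ∈ T.arc (g p) (g q) :=
    T.image_arc hg ((hinj p hpV q hqV).mono (subset_insert x _)) ▸ mem_image_of_mem g hx
  exact T.notMem_arc_of_mem_arms hD (hgU ⟨p, ⟨hpC, hpU⟩, rfl⟩) (hgU' ⟨q, ⟨hqC', hqU'⟩, rfl⟩) hgx

end FiniteTree

end LocalArms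

section Dynamics

variable {X : Type*} [TopologicalSpace X] {f : X → X} {c x y z : X} {C D : Set X} {n : ℕ}

/-- `f` is continuous, and locally injective away from the critical point `c`. -/
structure IsUnicritical (f : X → X) (c : X) : Prop where
  continuous : Continuous f
  locallyInjectiveAt : ∀ x, x ≠ c → LocallyInjectiveAt f x

namespace IsUnicritical

variable [T2Space X] (T : UniqueArcs X)

theorem injOn_arc (hf : IsUnicritical f c) (hc : c ∈ T.arc x y → c = y) : InjOn f (T.arc x y) :=
  T.injOn_arc hf.continuous fun p hp hpy ↦
    hf.locallyInjectiveAt p fun h ↦ hpy (h.trans (hc (h ▸ hp)))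

theorem apply_crit_mem (T : UniqueArcs X) (hf : IsUnicritical f c) (hD : MapsLocalArm f x C D)
    (hc : c ∈ C) : f c ∈ D :=
  hD.apply_mem T hf.continuous (hf.injOn_arc T fun _ ↦ rfl) hc

theorem injOn_arc_of_notMem (hf : IsUnicritical f c) (hC : C ∈ arms x) (hxc : x ≠ c) (hc : c ∉ C)
    (hy : y ∈ C) : InjOn f (T.arc x y) :=
  hf.injOn_arc T fun h ↦ absurd (T.mem_of_mem_arc hC hy h hxc.symm) hc

theorem apply_mem_of_crit_notMem (T : UniqueArcs X) (hf : IsUnicritical f c)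
    (hD : MapsLocalArm f x C D) (hxc : x ≠ c) (hc : c ∉ C) (hy : y ∈ C) : f y ∈ D :=
  hD.apply_mem T hf.continuous (hf.injOn_arc_of_notMem T hD.1 hxc hc hy) hy

end IsUnicritical

/-- The orbit of arms along the orbit of `z` under `f`: the germ of `L k` at `f^[k] z` is mapped to
the germ of `L (k + 1)`. -/
def IsArmOrbit (f : X → X) (z : X) (L : ℕ → Set X) : Prop :=
  ∀ k, MapsLocalArm f (f^[k] z) (L k) (L (k + 1))

namespace IsArmOrbit

variable {L : ℕ → Set X}

theorem mem_arms (hL : IsArmOrbit f z L) (k : ℕ) : L k ∈ arms (f^[k] z) := (hL k).1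

theorem mapsLocalArm_iterate (hL : IsArmOrbit f z L) (hf : Continuous f) (k : ℕ) :
    MapsLocalArm f^[k] z (L 0) (L k) := by
  induction k with
  | zero => exact mapsLocalArm_id (hL.mem_arms 0)
  | succ k ih => exact iterate_succ' f k ▸ (hL k).comp ih (hf.iterate k).continuousAt

theorem shift (hL : IsArmOrbit f z L) {m : ℕ} (hm : f^[m] z = z) :
    IsArmOrbit f z fun k ↦ L (m + k) := fun k ↦ by
  have h := hL (m + k)
  rwa [add_comm m k, iterate_add_apply, hm, add_comm k m] at h

end IsArmOrbit

theorem FiniteTree.exists_isArmOrbit [CompactSpace X] [T2Space X] (T : FiniteTree X)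
    (hf : Continuous f) (hloc : ∀ k, LocallyInjectiveAt f (f^[k] z)) (hC : C ∈ arms z) :
    ∃ L, L 0 = C ∧ IsArmOrbit f z L := by
  choose! image himage using fun k D hD ↦ T.exists_mapsLocalArm (C := D) hf (hloc k) hD
  let L : ℕ → Set X := fun k ↦ k.rec C image
  have hL (k : ℕ) : L k ∈ arms (f^[k] z) := by
    induction k with
    | zero => exact hC
    | succ k ih => exact iterate_succ_apply' f k z ▸ (himage k _ ih).2.1
  exact ⟨L, rfl, fun k ↦ himage k _ (hL k)⟩

theorem FiniteTree.exists_perm_arms [CompactSpace X] [T2Space X] (T : FiniteTree X)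
    {g : X → X} (hg : Continuous g) (hloc : LocallyInjectiveAt g z) (hz : g z = z) :
    ∃ σ : Equiv.Perm (arms z), ∀ (j : ℕ) (C : arms z), MapsLocalArm g^[j] z C ((σ ^ j) C) := by
  have hex (C : arms z) : ∃ D : arms z, MapsLocalArm g z C D := by
    obtain ⟨D, hD⟩ := T.exists_mapsLocalArm hg hloc C.2
    exact ⟨⟨D, hz ▸ hD.2.1⟩, hD⟩
  choose σ hσ using hex
  have hinj : Injective σ := fun C C' h ↦
    Subtype.ext (T.mapsLocalArm_source_unique hg hloc (hσ C) (h ▸ hσ C'))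
  have := (T.arms_finite z).to_subtype
  refine ⟨.ofBijective σ (Finite.injective_iff_bijective.1 hinj), fun j C ↦ ?_⟩
  rw [← Equiv.Perm.iterate_eq_pow]
  exact MapsLocalArm.iterate hz hg.continuousAt hσ j C

/-- `z` is the characteristic point of its orbit: the component of `X \ {z}` containing the critical
point `c` contains all other points of the orbit, but not the critical value `f c`. -/
structure IsCharacteristicPoint (f : X → X) (c z : X) : Prop where
  critValue_ne : f c ≠ z
  critValue_notMem : f c ∉ armTo z c
  orbit_mem : ∀ k, f^[k] z ≠ z → f^[k] z ∈ armTo z c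

namespace IsCharacteristicPoint

theorem iterate_ne_critValue (hz : IsCharacteristicPoint f c z) (k : ℕ) : f^[k] z ≠ f c := fun h ↦
  hz.critValue_notMem (h ▸ hz.orbit_mem k (h ▸ hz.critValue_ne))

theorem iterate_ne_crit (hz : IsCharacteristicPoint f c z) (k : ℕ) : f^[k] z ≠ c := fun h ↦
  hz.iterate_ne_critValue (k + 1) (by rw [iterate_succ_apply', h])

theorem crit_ne (hz : IsCharacteristicPoint f c z) : c ≠ z := (hz.iterate_ne_crit 0).symm

theorem locallyInjectiveAt_iterate (hf : IsUnicritical f c) (hz : IsCharacteristicPoint f c z)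
    (k : ℕ) : LocallyInjectiveAt f (f^[k] z) :=
  hf.locallyInjectiveAt _ (hz.iterate_ne_crit k)

theorem mem_of_critValue_mem [T2Space X] (T : UniqueArcs X) (hz : IsCharacteristicPoint f c z)
    {i : ℕ} (hi : f^[i] z ≠ z) (hC : C ∈ arms (f^[i] z)) (hc : f c ∈ C) : z ∈ C := by
  refine T.mem_of_mem_arc hC hc ?_ hi.symm
  by_contra hzarc
  exact hz.critValue_notMem <| mem_of_isPreconnected_of_mem_arms (armTo_mem_arms hz.crit_ne)
    (hz.orbit_mem i hi) (T.isPreconnected_arc _ _) (T.left_mem_arc _ _) (T.right_mem_arc _ _) hzarc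

variable [T2Space X] {L : ℕ → Set X}

theorem critValue_mem_or_iterate_mem (T : UniqueArcs X) (hf : IsUnicritical f c)
    (hz : IsCharacteristicPoint f c z) (hn : ∀ k, 1 ≤ k → k < n → f^[k] z ≠ z)
    (hL : IsArmOrbit f z L) {i j : ℕ} (hji : j < i) (hin : i ≤ n) (hc : c ∈ L j) :
    f c ∈ L i ∨ ∃ k, f^[k] z ∈ L i := by
  induction i, hji using Nat.le_induction with
  | base => exact .inl (hf.apply_crit_mem T (hL j) hc)
  | succ i hji ih =>
    by_cases hci : c ∈ L i
    · exact .inl (hf.apply_crit_mem T (hL i) hci)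
    obtain ⟨k, hk⟩ : ∃ k, f^[k] z ∈ L i := by
      rcases ih (by omega) with hv | hk
      · exact ⟨0, hz.mem_of_critValue_mem T (hn i (by omega) (by omega)) (hL.mem_arms i) hv⟩
      · exact hk
    refine .inr ⟨k + 1, ?_⟩
    rw [iterate_succ_apply']
    exact hf.apply_mem_of_crit_notMem T (hL i) (hz.iterate_ne_crit i) hci hk

theorem return_eq_armTo_or (T : UniqueArcs X) (hf : IsUnicritical f c)
    (hz : IsCharacteristicPoint f c z) (hper : ExactPeriod f z n) (hL : IsArmOrbit f z L) {j : ℕ}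
    (hj : j < n) (hc : c ∈ L j) : L n = armTo z (f c) ∨ L n = armTo z c := by
  have harm : L n ∈ arms z := hper.2.1 ▸ hL.mem_arms n
  rcases hz.critValue_mem_or_iterate_mem T hf hper.2.2 hL hj le_rfl hc with hv | ⟨k, hk⟩
  · exact .inl (eq_armTo_of_mem harm hv)
  · exact .inr <| arms_eq_of_mem harm (armTo_mem_arms hz.crit_ne) hk
      (hz.orbit_mem k (ne_of_mem_of_mem_arms harm hk))

theorem exists_return_eq_armTo_or (T : UniqueArcs X) (hf : IsUnicritical f c)
    (hz : IsCharacteristicPoint f c z) (hper : ExactPeriod f z n) (hL : IsArmOrbit f z L) {j : ℕ}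
    (hc : c ∈ L j) : ∃ k, L (n * k) = armTo z (f c) ∨ L (n * k) = armTo z c := by
  have hfix : f^[n * (j / n)] z = z := by rw [iterate_mul]; exact iterate_fixed hper.2.1 _
  have hcrit : c ∈ L (n * (j / n) + j % n) := (Nat.div_add_mod j n).symm ▸ hc
  have hreturn := hz.return_eq_armTo_or T hf hper (hL.shift hfix) (Nat.mod_lt j hper.1) hcrit
  exact ⟨j / n + 1, hreturn⟩

theorem exists_crit_mem (T : UniqueArcs X) (hf : IsUnicritical f c)
    (hz : IsCharacteristicPoint f c z) (hL : IsArmOrbit f z L) {e : X} (he : e ∈ L 0) {m : ℕ}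
    (hm : c ∈ f^[m] '' T.arc z e) : ∃ j, c ∈ L j := by
  by_contra! hno
  have hinj {k : ℕ} (hk : f^[k] e ∈ L k) : InjOn f (T.arc (f^[k] z) (f^[k] e)) :=
    hf.injOn_arc_of_notMem T (hL.mem_arms k) (hz.iterate_ne_crit k) (hno k) hk
  have hmem (k : ℕ) : f^[k] e ∈ L k := by
    induction k with
    | zero => exact he
    | succ k ih =>
      exact iterate_succ_apply' f k e ▸ (hL k).apply_mem T hf.continuous (hinj ih) ih
  have himage (k : ℕ) : f^[k] '' T.arc z e = T.arc (f^[k] z) (f^[k] e) := by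
    induction k with
    | zero => simp
    | succ k ih =>
      rw [iterate_succ', image_comp, ih, T.image_arc hf.continuous (hinj (hmem k)), comp_apply,
        comp_apply]
  exact hno m <| T.mem_of_mem_arc (hL.mem_arms m) (hmem m) (himage m ▸ hm)
    (hz.iterate_ne_crit m).symm

variable [CompactSpace X]

theorem mapsLocalArm_armTo_crit (T : FiniteTree X) (hf : IsUnicritical f c)
    (hz : IsCharacteristicPoint f c z) (hper : ExactPeriod f z n) :
    MapsLocalArm f^[n] z (armTo z c) (armTo z (f c)) ∨
      MapsLocalArm f^[n] z (armTo z c) (armTo z c) := by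
  obtain ⟨L, hL0, hL⟩ := T.exists_isArmOrbit hf.continuous (hz.locallyInjectiveAt_iterate hf)
    (armTo_mem_arms hz.crit_ne)
  have hc : c ∈ L 0 := hL0 ▸ mem_armTo hz.crit_ne
  have hmaps := hL0 ▸ hL.mapsLocalArm_iterate hf.continuous n
  rcases hz.return_eq_armTo_or T.toUniqueArcs hf hper hL hper.1 hc with h | h
  · exact .inl (h ▸ hmaps)
  · exact .inr (h ▸ hmaps)

theorem exists_mapsLocalArm_armTo (T : FiniteTree X) (hf : IsUnicritical f c)
    (hz : IsCharacteristicPoint f c z) (hper : ExactPeriod f z n)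
    (hexp : ∀ e, IsEndpoint e → e ≠ z → ∃ m, c ∈ f^[m] '' T.arc z e) (hC : C ∈ arms z) :
    ∃ k, MapsLocalArm f^[n * k] z C (armTo z (f c)) ∨ MapsLocalArm f^[n * k] z C (armTo z c) := by
  obtain ⟨L, rfl, hL⟩ :=
    T.exists_isArmOrbit hf.continuous (hz.locallyInjectiveAt_iterate hf) hC
  obtain ⟨e, heL, he⟩ := T.exists_isEndpoint_mem_of_mem_arms hC
  obtain ⟨m, hm⟩ := hexp e he (ne_of_mem_of_mem_arms hC heL)
  obtain ⟨j, hj⟩ := hz.exists_crit_mem T.toUniqueArcs hf hL heL hm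
  obtain ⟨k, hk⟩ := hz.exists_return_eq_armTo_or T.toUniqueArcs hf hper hL hj
  have hmaps := hL.mapsLocalArm_iterate hf.continuous (n * k)
  rcases hk with h | h
  · exact ⟨k, .inl (h ▸ hmaps)⟩
  · exact ⟨k, .inr (h ▸ hmaps)⟩

end IsCharacteristicPoint

theorem sameCycle_or_of_forall_sameCycle {α : Type*} {σ : Equiv.Perm α} {a b : α}
    (hb : σ b = a ∨ σ b = b) (h : ∀ x, σ.SameCycle x a ∨ σ.SameCycle x b) :
    (∀ x y, σ.SameCycle x y) ∨ σ b = b ∧ ∀ x y, x ≠ b → y ≠ b → σ.SameCycle x y := by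
  rcases hb with rfl | hb
  · have hx (x : α) : σ.SameCycle x b := (h x).elim Equiv.Perm.sameCycle_apply_right.1 id
    exact .inl fun x y ↦ (hx x).trans (hx y).symm
  · have hx (x : α) (hxb : x ≠ b) : σ.SameCycle x a :=
      (h x).resolve_right fun h ↦ hxb (h.eq_of_right hb)
    exact .inr ⟨hb, fun x y hxb hyb ↦ (hx x hxb).trans (hx y hyb).symm⟩

theorem two_kinds_of_periodic_orbits_general [CompactSpace X] [T2Space X] (T : FiniteTree X)
    (hf : IsUnicritical f c) (hz : IsCharacteristicPoint f c z) (hper : ExactPeriod f z n)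
    (hexp : ∀ e, IsEndpoint e → e ≠ z → ∃ m, c ∈ f^[m] '' T.arc z e) :
    ArmsTransitive f n z ∨
      (MapsLocalArm f^[n] z (armTo z c) (armTo z c) ∧
        ∀ C ∈ arms z, C ≠ armTo z c → ∀ C' ∈ arms z, C' ≠ armTo z c →
          ∃ j : ℕ, MapsLocalArm (f^[n * j]) z C C') := by
  obtain ⟨σ, hσ⟩ := T.exists_perm_arms (hf.continuous.iterate n)
    (.iterate hf.continuous (hz.locallyInjectiveAt_iterate hf) n) hper.2.1
  simp only [← iterate_mul] at hσ
  have hpow {j : ℕ} {C D : arms z} (h : MapsLocalArm f^[n * j] z C D) : (σ ^ j) C = D :=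
    Subtype.ext ((hσ j C).target_unique T.toUniqueArcs h)
  let armCrit : arms z := ⟨armTo z c, armTo_mem_arms hz.crit_ne⟩
  let armValue : arms z := ⟨armTo z (f c), armTo_mem_arms hz.critValue_ne⟩
  have hcrit : σ armCrit = armValue ∨ σ armCrit = armCrit :=
    (hz.mapsLocalArm_armTo_crit T hf hper).imp
      (fun h ↦ hpow (j := 1) (by rwa [mul_one])) fun h ↦ hpow (j := 1) (by rwa [mul_one])
  have hreach (C : arms z) : σ.SameCycle C armValue ∨ σ.SameCycle C armCrit := by
    obtain ⟨k, hk⟩ := hz.exists_mapsLocalArm_armTo T hf hper hexp C.2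
    exact hk.imp (fun h ↦ ⟨k, hpow h⟩) fun h ↦ ⟨k, hpow h⟩
  have := (T.arms_finite z).to_subtype
  have hmaps {C C' : arms z} (h : σ.SameCycle C C') : ∃ j : ℕ, MapsLocalArm f^[n * j] z C C' := by
    obtain ⟨j, -, rfl⟩ := h.exists_pow_eq'
    exact ⟨j, hσ j C⟩
  rcases sameCycle_or_of_forall_sameCycle hcrit hreach with hall | ⟨hfix, hothers⟩
  · exact .inl fun C hC C' hC' ↦ hmaps (hall ⟨C, hC⟩ ⟨C', hC'⟩)
  · refine .inr ⟨?_, fun C hC hne C' hC' hne' ↦ hmaps (hothers ⟨C, hC⟩ ⟨C', hC'⟩ ?_ ?_)⟩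
    · simpa [hfix] using hσ 1 armCrit
    · exact fun h ↦ hne (congrArg Subtype.val h)
    · exact fun h ↦ hne' (congrArg Subtype.val h)

end Dynamics

namespace HubbardTree

variable {X : Type*} [TopologicalSpace X] (H : HubbardTree X)

/-- The finite tree underlying a Hubbard tree, without its dynamics. -/
def toFiniteTree : FiniteTree X where
  arc := H.arc
  arc_isArc := H.arc_isArc
  arc_unique := H.arc_unique
  arms_finite := H.arms_finite
  endpoint_finite := H.endpoint_finite

theorem isUnicritical : IsUnicritical H.f H.c0 where
  continuous := H.cont
  locallyInjectiveAt x hx := by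
    obtain ⟨U, hU, hxU, hemb⟩ := H.local_homeo x hx
    exact ⟨U, hU.mem_nhds hxU, injOn_iff_injective.2 hemb.injective⟩

variable {H}

theorem IsCharacteristic.isCharacteristicPoint {z : X} (h : H.IsCharacteristic z) :
    IsCharacteristicPoint H.f H.c0 z := by
  obtain ⟨Cv, Cz, hCv, hCz, hne, hcv, hcz, horbit⟩ := h
  obtain rfl := eq_armTo_of_mem hCz hcz
  exact ⟨ne_of_mem_of_mem_arms hCv hcv, fun hc ↦ hne (arms_eq_of_mem hCv hCz hcv hc), horbit⟩

end HubbardTree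

/-- Corollary 3.4, "Two Kinds of Periodic Orbits".
The first return map of the characteristic point of a periodic orbit of branch
points either permutes all local arms transitively in a single cycle, or fixes the
local arm pointing to the critical point and permutes all other local arms
transitively in a single cycle. -/
theorem two_kinds_of_periodic_orbits
    {X : Type*} [TopologicalSpace X] (H : HubbardTree X) (z : X) (n : ℕ)
    (hchar : H.IsCharacteristic z) (hper : ExactPeriod H.f z n)
    (hbranch : ∀ k : ℕ, IsBranchPt (H.f^[k] z)) :
    ArmsTransitive H.f n z ∨
      (MapsLocalArm (H.f^[n]) z (armTo z H.c0) (armTo z H.c0) ∧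
        H.OtherArmsTransitive n z) := by
  have := H.compact
  have := H.t2
  exact two_kinds_of_periodic_orbits_general H.toFiniteTree H.isUnicritical
    hchar.isCharacteristicPoint hper fun e he hez ↦
      H.expansive z e hez.symm (.inl (hbranch 0)) (.inr (H.endpoints_on_orbit e he))

end HubbardTrees
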